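/- arXiv:2311.08020 — 3 statements merged into one kernel-verified Lean document; each statement's English description precedes it below -/
import Mathlib

section
/- For the plethystic substitution f ↦ f[(q-1)x] defined on symmetric functions by p_k[(q-1)x] = (q^k - 1)p_k, the elementary symmetric function satisfies e_n[(q-1)x]/(q-1) = Σ_{α ⊨ n} (-1)^{ℓ(α)-1} [α_1]_q e_{sort(α)}, summing over compositions α of n. -/
/- We model the ring of symmetric functions over `ℚ[q]` as the polynomial ring
`Λ = ℚ[q][p_1, p_2, …]` in the power sums, which are algebraically independent:
the variable `X k` of `MvPolynomial ℕ (Polynomial ℚ)` stands for `p_{k+1}`. -/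
noncomputable abbrev Lam : Type := MvPolynomial ℕ (Polynomial ℚ)

/-- The power sum `p_λ` for a partition `λ`. -/
noncomputable def pProd {m : ℕ} (μ : Nat.Partition m) : Lam :=
  (μ.parts.map (fun k => MvPolynomial.X (k - 1))).prod

/-- `z_λ = ∏ i^{m_i} m_i!`. -/
noncomputable def zPart {m : ℕ} (μ : Nat.Partition m) : ℕ :=
  μ.parts.prod * ∏ i ∈ μ.parts.toFinset, (μ.parts.count i).factorial

/-- The elementary symmetric function `e_m = Σ_{λ ⊢ m} (-1)^{m-ℓ(λ)} z_λ⁻¹ p_λ`,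
expressed in the power sum basis. -/
noncomputable def E (m : ℕ) : Lam :=
  ∑ μ : Nat.Partition m,
    MvPolynomial.C (Polynomial.C ((-1 : ℚ) ^ (m - Multiset.card μ.parts) / zPart μ)) * pProd μ

/-- The q-integer `[m]_q` over `ℚ`. -/
noncomputable def qintQ (m : ℕ) : Polynomial ℚ := ∑ i ∈ Finset.range m, Polynomial.X ^ i

/-!
Let `E(t) = ∑ eₙ tⁿ`. The expansion of `eₙ` in power sums says that
`E(t) = exp (∑ (-1)^(i-1) pᵢ tⁱ / i)`, so the substitution `pᵢ ↦ (qⁱ - 1) pᵢ` turns `E(t)` into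
`E(qt) / E(t) = 1 + (E(qt) - E(t)) / E(t)`. Expanding `1 / E(t)` as an alternating sum over
compositions, the coefficient of `tⁿ` becomes a sum over compositions of `n` whose first part `k`
comes from `E(qt) - E(t)` and so carries the factor `qᵏ - 1 = (q - 1)[k]_q`.
-/

open PowerSeries Finset

theorem multiset_prod_map_pow_eq_pow_sum {ι M : Type*} [CommMonoid M] (s : Multiset ι) (f : ι → ℕ)
    (a : M) : (s.map fun i => a ^ f i).prod = a ^ (s.map f).sum := by
  induction s using Multiset.induction_on with
  | empty => simp
  | cons i s ih => simp [pow_add, ih]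

section PartitionExp

open scoped PowerSeries.WithPiTopology

variable {R : Type*} [CommRing R]

theorem C_add_tsum_coeff_smul_X_pow_eq_expand [TopologicalSpace R] [T2Space R] {k : ℕ}
    (hk : k ≠ 0) (f : R⟦X⟧) :
    C (constantCoeff f) + ∑' j, coeff (j + 1) f • (X : R⟦X⟧) ^ (k * (j + 1)) = expand k hk f := by
  have hsum := Nat.Partition.summable_genFun_term' (fun _ j => coeff j f) hk
  ext d
  rw [map_add, hsum.map_tsum _ (WithPiTopology.continuous_coeff R d)]
  simp only [coeff_smul, coeff_X_pow]
  by_cases hd : k ∣ d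
  · obtain ⟨m, rfl⟩ := hd
    rw [coeff_expand_mul]
    rcases m with _ | m
    · simp [hk]
    · rw [tsum_eq_single m fun j hj => by simp [hk, hj.symm]]
      simp [coeff_C, hk]
  · have hd_mul (j : ℕ) : d ≠ k * (j + 1) := fun h => hd ⟨j + 1, h⟩
    have hd_zero : d ≠ 0 := fun h => hd (h ▸ dvd_zero k)
    simp [coeff_expand_of_not_dvd k hk f hd, coeff_C, hd_zero, hd_mul]

variable [Algebra ℚ R]

/-- The power series `exp (∑ i ≥ 1, a i * X ^ i)`, encoded by its expansion over partitions, in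
which a part `i` of multiplicity `c` contributes `a i ^ c / c!`. The value `a 0` is ignored. -/
noncomputable def partitionExp (a : ℕ → R) : R⟦X⟧ :=
  Nat.Partition.genFun fun i c => a i ^ c * algebraMap ℚ R (1 / c.factorial)

theorem coeff_partitionExp (a : ℕ → R) (n : ℕ) :
    coeff n (partitionExp a) = ∑ μ : n.Partition,
      algebraMap ℚ R (1 / ∏ i ∈ μ.parts.toFinset, ((μ.parts.count i).factorial : ℚ)) *
        (μ.parts.map a).prod := by
  rw [partitionExp, Nat.Partition.coeff_genFun]
  refine sum_congr rfl fun μ _ => ?_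
  rw [prod_multiset_map_count]
  simp only [Finsupp.prod, Multiset.toFinsupp_support, Multiset.toFinsupp_apply, one_div,
    ← prod_inv_distrib, map_prod, prod_mul_distrib, mul_comm]

theorem hasProd_partitionExp [TopologicalSpace R] [T2Space R] (a : ℕ → R) :
    HasProd (fun i => expand (i + 1) i.succ_ne_zero (rescale (a (i + 1)) (exp R)))
      (partitionExp a) := by
  convert! Nat.Partition.hasProd_genFun
    (fun i c => a i ^ c * algebraMap ℚ R (1 / c.factorial)) using 2 with i
  rw [← C_add_tsum_coeff_smul_X_pow_eq_expand, ← coeff_zero_eq_constantCoeff_apply]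
  simp

theorem partitionExp_mul_partitionExp (a b : ℕ → R) :
    partitionExp a * partitionExp b = partitionExp (a + b) := by
  let _ : TopologicalSpace R := ⊥
  have _ : DiscreteTopology R := ⟨rfl⟩
  refine ((hasProd_partitionExp a).mul (hasProd_partitionExp b)).unique ?_
  convert! hasProd_partitionExp (a + b) using 2 with i
  rw [← map_mul, exp_mul_exp_eq_exp_add, Pi.add_apply]

theorem rescale_partitionExp (r : R) (a : ℕ → R) :
    rescale r (partitionExp a) = partitionExp fun i => r ^ i * a i := by
  ext n
  simp only [coeff_rescale, coeff_partitionExp, mul_sum]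
  refine sum_congr rfl fun μ _ => ?_
  rw [Multiset.prod_map_mul, multiset_prod_map_pow_eq_pow_sum, Multiset.map_id', μ.parts_sum,
    mul_left_comm]

theorem map_partitionExp {S : Type*} [CommRing S] [Algebra ℚ S] (φ : R →+* S) (a : ℕ → R) :
    PowerSeries.map φ (partitionExp a) = partitionExp fun i => φ (a i) := by
  ext n
  simp [coeff_partitionExp, map_multiset_prod]

end PartitionExp

section Composition

theorem sum_composition_succ {M : Type*} [AddCommMonoid M] (n : ℕ) (F : List ℕ → M) :
    ∑ α : Composition (n + 1), F α.blocks =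
      ∑ ij ∈ antidiagonal n, ∑ β : Composition ij.2, F ((ij.1 + 1) :: β.blocks) := by
  rw [sum_sigma']
  symm
  refine sum_bij (fun x hx => ((Composition.single (x.1.1 + 1) x.1.1.succ_pos).append x.2).cast
    (by have := HasAntidiagonal.mem_antidiagonal.1 (mem_sigma.1 hx).1; lia)) ?_ ?_ ?_ ?_
  · simp
  · rintro ⟨⟨i, j⟩, β⟩ hij ⟨⟨i', j'⟩, β'⟩ hij' h
    obtain ⟨rfl, hβ⟩ : i = i' ∧ β.blocks = β'.blocks := by
      simpa using congrArg Composition.blocks h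
    obtain ⟨rfl, hββ'⟩ := Sigma.mk.inj_iff.1
      (Composition.sigma_eq_iff_blocks_eq (c := ⟨j, β⟩) (c' := ⟨j', β'⟩) |>.2 hβ)
    rw [eq_of_heq hββ']
  · intro α _
    obtain ⟨k, l, hα⟩ := List.exists_cons_of_ne_nil (mt α.blocks_eq_nil.1 n.succ_ne_zero)
    have hk : 0 < k := α.blocks_pos (by simp [hα])
    have hsum : k + l.sum = n + 1 := by rw [← List.sum_cons, ← hα, α.blocks_sum]
    refine ⟨⟨(k - 1, l.sum), ⟨l, fun hi => α.blocks_pos (by simp [hα, hi]), rfl⟩⟩, ?_, ?_⟩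
    · simp only [mem_sigma, HasAntidiagonal.mem_antidiagonal, mem_univ, and_true]
      lia
    · ext1
      simp [hα, Nat.sub_add_cancel hk]
  · intro x _
    simp

variable {R : Type*} [Ring R]

/-- The alternating sum `∑ (-1) ^ ℓ(α) * f α₁ * f α₂ * ⋯` over the compositions `α` of `n`. When
`f 0 = 1` these are the coefficients of the inverse of `∑ f n * X ^ n`. -/
def altCompSum (f : ℕ → R) (n : ℕ) : R :=
  ∑ α : Composition n, (-1) ^ α.length * (α.blocks.map f).prod

theorem altCompSum_zero (f : ℕ → R) : altCompSum f 0 = 1 := by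
  have hblocks (α : Composition 0) : α.blocks = [] := α.blocks_eq_nil.2 rfl
  simp [altCompSum, ← Composition.blocks_length, hblocks, composition_card]

theorem altCompSum_succ (f : ℕ → R) (n : ℕ) :
    altCompSum f (n + 1) = -∑ ij ∈ antidiagonal n, f (ij.1 + 1) * altCompSum f ij.2 := by
  simp only [altCompSum, ← Composition.blocks_length, mul_sum, ← sum_neg_distrib]
  rw [sum_composition_succ n fun l => (-1) ^ l.length * (l.map f).prod]
  refine sum_congr rfl fun ij _ => sum_congr rfl fun β _ => ?_
  rw [List.length_cons, List.map_cons, List.prod_cons, pow_succ, mul_neg_one, neg_mul,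
    ((Commute.neg_one_left (f (ij.1 + 1))).pow_left _).left_comm]

theorem mk_mul_mk_altCompSum {f : ℕ → R} (hf : f 0 = 1) :
    PowerSeries.mk f * PowerSeries.mk (altCompSum f) = 1 := by
  ext n
  rw [PowerSeries.coeff_mul]
  cases n with
  | zero => simp [hf, altCompSum_zero]
  | succ n => simp [Nat.sum_antidiagonal_succ, hf, altCompSum_succ, PowerSeries.coeff_one]

theorem coeff_succ_mul_mk_altCompSum {g : R⟦X⟧} (hg : constantCoeff g = 0) (f : ℕ → R) (n : ℕ) :
    coeff (n + 1) (g * PowerSeries.mk (altCompSum f)) = ∑ α : Composition (n + 1),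
      (-1) ^ (α.length - 1) * (coeff α.blocks.headI g * (α.blocks.tail.map f).prod) := by
  simp only [← Composition.blocks_length]
  rw [sum_composition_succ n fun l =>
      (-1) ^ (l.length - 1) * (coeff l.headI g * (l.tail.map f).prod),
    PowerSeries.coeff_mul, Nat.sum_antidiagonal_succ, coeff_zero_eq_constantCoeff_apply, hg,
    zero_mul, zero_add]
  refine sum_congr rfl fun ij _ => ?_
  rw [coeff_mk, altCompSum, mul_sum]
  exact sum_congr rfl fun β _ => ((Commute.neg_one_left _).pow_left _).symm.left_comm _

end Composition

theorem coeff_eq_of_mul_mk_eq_rescale_mk {R : Type*} [CommRing R] {r : R} {f : ℕ → R}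
    (hf : f 0 = 1) {g : R⟦X⟧} (h : g * PowerSeries.mk f = rescale r (PowerSeries.mk f)) {n : ℕ}
    (hn : n ≠ 0) :
    coeff n g = (r - 1) * ∑ α : Composition n, (-1) ^ (α.length - 1) *
      (∑ i ∈ range α.blocks.headI, r ^ i) * (α.blocks.map f).prod := by
  have hg : g = 1 + (rescale r (PowerSeries.mk f) - PowerSeries.mk f) *
      PowerSeries.mk (altCompSum f) := by
    linear_combination PowerSeries.mk (altCompSum f) * h + (1 - g) * mk_mul_mk_altCompSum hf
  have hdiff : constantCoeff (rescale r (PowerSeries.mk f) - PowerSeries.mk f) = 0 := by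
    rw [← coeff_zero_eq_constantCoeff_apply, map_sub, coeff_rescale, pow_zero, one_mul, sub_self]
  obtain ⟨n, rfl⟩ := Nat.exists_eq_add_one_of_ne_zero hn
  rw [hg, map_add, coeff_succ_mul_mk_altCompSum hdiff, PowerSeries.coeff_one,
    if_neg n.succ_ne_zero, zero_add, mul_sum]
  refine sum_congr rfl fun α _ => ?_
  obtain ⟨k, l, hα⟩ := List.exists_cons_of_ne_nil (mt α.blocks_eq_nil.1 n.succ_ne_zero)
  simp only [hα, List.headI_cons, List.tail_cons, List.map_cons, List.prod_cons, map_sub,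
    coeff_rescale, coeff_mk]
  linear_combination (-(-1) ^ (α.length - 1) * f k * (l.map f).prod) * mul_geom_sum r k

/-- The coefficient `(-1) ^ (i - 1) * p_i / i` of `t ^ i` in the logarithm of `∑ e_n * t ^ n`. At
`i = 0` it is `0`, by the convention `1 / 0 = 0`. -/
noncomputable def logE (i : ℕ) : Lam :=
  algebraMap ℚ Lam ((-1) ^ (i - 1) / i) * MvPolynomial.X (i - 1)

theorem pow_sub_card_div_prod_parts {K : Type*} [Semifield K] (u : K) {n : ℕ} (μ : n.Partition) :
    u ^ (n - Multiset.card μ.parts) / μ.parts.prod =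
      (μ.parts.map fun i : ℕ => u ^ (i - 1) / (i : K)).prod := by
  have hexp : (μ.parts.map fun i => i - 1).sum = n - Multiset.card μ.parts := by
    rw [Multiset.sum_map_tsub _ fun i hi => μ.parts_pos hi, Multiset.map_id', μ.parts_sum,
      Multiset.map_const', Multiset.sum_replicate, smul_eq_mul, mul_one]
  rw [Multiset.prod_map_div, multiset_prod_map_pow_eq_pow_sum, hexp, Nat.cast_multiset_prod]

theorem mk_E_eq_partitionExp_logE : PowerSeries.mk E = partitionExp logE := by
  ext1 n
  rw [coeff_mk, coeff_partitionExp, E]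
  refine sum_congr rfl fun μ _ => ?_
  have hcoeff : (-1 : ℚ) ^ (n - Multiset.card μ.parts) / zPart μ =
      1 / (∏ i ∈ μ.parts.toFinset, ((μ.parts.count i).factorial : ℚ)) *
        (μ.parts.map fun i : ℕ => (-1 : ℚ) ^ (i - 1) / (i : ℚ)).prod := by
    rw [← pow_sub_card_div_prod_parts, zPart]
    push_cast
    field_simp
  have hC (c : ℚ) : (MvPolynomial.C (Polynomial.C c) : Lam) = algebraMap ℚ Lam c := rfl
  have hlogE : (μ.parts.map logE).prod = algebraMap ℚ Lam
      (μ.parts.map fun i : ℕ => (-1 : ℚ) ^ (i - 1) / (i : ℚ)).prod * pProd μ := by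
    rw [map_multiset_prod, Multiset.map_map, pProd, ← Multiset.prod_map_mul]
    rfl
  rw [hC, hcoeff, hlogE, map_mul, mul_assoc]

theorem E_zero : E 0 = 1 := by
  simp [E, pProd, zPart]

theorem mk_map_E_mul_mk_map_E {S : Type*} [CommRing S] [Algebra ℚ S] {φ ψ : Lam →ₐ[ℚ] S} {q : S}
    (h : ∀ k, φ (MvPolynomial.X k) = (q ^ (k + 1) - 1) * ψ (MvPolynomial.X k)) :
    (PowerSeries.mk fun n => φ (E n)) * (PowerSeries.mk fun n => ψ (E n)) =
      rescale q (PowerSeries.mk fun n => ψ (E n)) := by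
  have mk_map_E (χ : Lam →ₐ[ℚ] S) :
      (PowerSeries.mk fun n => χ (E n)) = partitionExp fun i => χ (logE i) := by
    calc PowerSeries.mk (fun n => χ (E n))
        = PowerSeries.map (χ : Lam →+* S) (PowerSeries.mk E) := rfl
      _ = partitionExp fun i => χ (logE i) := by
        rw [mk_E_eq_partitionExp_logE, map_partitionExp, RingHom.coe_coe]
  have map_logE (i : ℕ) : φ (logE i) + ψ (logE i) = q ^ i * ψ (logE i) := by
    cases i with
    | zero => simp [logE]
    | succ k =>
      simp only [logE, map_mul, AlgHom.commutes, Nat.add_sub_cancel, h]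
      ring
  rw [mk_map_E, mk_map_E, partitionExp_mul_partitionExp, rescale_partitionExp]
  exact congrArg partitionExp (funext map_logE)

theorem pleth_esymm_qsub1_general {S : Type*} [CommRing S] [Algebra ℚ S] {n : ℕ} (hn : 1 ≤ n)
    (φ ψ : Lam →ₐ[ℚ] S) (q : S)
    (h : ∀ k : ℕ, φ (MvPolynomial.X k) = (q ^ (k + 1) - 1) * ψ (MvPolynomial.X k)) :
    φ (E n) = (q - 1) * ∑ α : Composition n, (-1) ^ (α.length - 1) *
      (∑ i ∈ range α.blocks.headI, q ^ i) * (α.blocks.map fun i => ψ (E i)).prod := by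
  have hψ : ψ (E 0) = 1 := by rw [E_zero, map_one]
  simpa only [coeff_mk] using coeff_eq_of_mul_mk_eq_rescale_mk (f := fun n => ψ (E n)) hψ
    (mk_map_E_mul_mk_map_E h) (Nat.one_le_iff_ne_zero.1 hn)

/-- for the plethystic substitution `f ↦ f[(q-1)x]`, i.e. the `ℚ[q]`-algebra
homomorphism `Φ` on symmetric functions determined by `p_k ↦ (q^k - 1) p_k`, one has
`e_n[(q-1)x]/(q-1) = Σ_{α ⊨ n} (-1)^{ℓ(α)-1} [α_1]_q e_{sort(α)}` (with the denominator
cleared), summing over compositions `α` of `n`. -/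
theorem pleth_esymm_qsub1 (n : ℕ) (hn : 1 ≤ n) (Φ : Lam →ₐ[Polynomial ℚ] Lam)
    (hΦ : ∀ k : ℕ, Φ (MvPolynomial.X k) =
      MvPolynomial.C (Polynomial.X ^ (k + 1) - 1) * MvPolynomial.X k) :
    Φ (E n) = MvPolynomial.C (Polynomial.X - 1) *
      ∑ α : Composition n, (-1 : Lam) ^ (α.length - 1) *
        MvPolynomial.C (qintQ α.blocks.headI) * (α.blocks.map E).prod := by
  have h := pleth_esymm_qsub1_general hn (Φ.restrictScalars ℚ) (AlgHom.id ℚ Lam)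
    (MvPolynomial.C Polynomial.X) (by simpa using hΦ)
  simpa [qintQ] using h
end

section
/- For a natural unit interval graph G = ([n],E), the coefficient of e_n in the elementary symmetric function expansion of X_G(x;q) equals [n]_q · [b_2]_q [b_3]_q ··· [b_n]_q, where b_i is the number of neighbours j < i of vertex i in G. -/
noncomputable def qint (m : ℕ) : Polynomial ℤ := ∑ i ∈ Finset.range m, Polynomial.X ^ i

/-- `G` is a natural unit interval graph. -/
def IsNUIG {n : ℕ} (G : SimpleGraph (Fin n)) : Prop :=
  ∀ i j k : Fin n, i < j → j < k → G.Adj i k → G.Adj i j ∧ G.Adj j k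

/-- The number of ascents of a colouring. -/
noncomputable def ascNum {n : ℕ} (G : SimpleGraph (Fin n)) {N : ℕ} (κ : Fin n → Fin N) : ℕ :=
  Nat.card {p : Fin n × Fin n // p.1 < p.2 ∧ G.Adj p.1 p.2 ∧ κ p.1 < κ p.2}

/-- The chromatic quasisymmetric function `X_G(x;q)` in the variables `x_1, …, x_N`. -/
noncomputable def cqf {n : ℕ} (G : SimpleGraph (Fin n)) (N : ℕ) :
    MvPolynomial (Fin N) (Polynomial ℤ) :=
  ∑ᶠ (κ : Fin n → Fin N) (_ : ∀ i j, G.Adj i j → κ i ≠ κ j),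
    MvPolynomial.C (Polynomial.X ^ ascNum G κ) * ∏ i, MvPolynomial.X (κ i)

/-- `b_i`: the number of neighbours of `i` smaller than `i`. -/
noncomputable def bG {n : ℕ} (G : SimpleGraph (Fin n)) (i : Fin n) : ℕ :=
  Nat.card {j : Fin n // j < i ∧ G.Adj j i}

/-!
For `f` in the variables `x_0, …, x_m` put `∂f = ∂f/∂x_0` evaluated at `(1, …, 1)`. On a product
of elementary symmetric polynomials this is a polynomial in `m`, so it may be evaluated at
`m = -1`, that is, for *no* variables at all. There every `e_a` with `a > 0` vanishes, and the
product rule kills all `e_μ` with at least two parts, while `∂e_n` becomes `-(-1)^n`.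

On `X_G`, grouping the colourings by the set of colours used turns the same value into a signed sum
over surjective colourings with a marked vertex `v` in the smallest colour class. Delete the last
vertex `n`: it either joins an existing colour class or opens a new one, with opposite signs. As the
earlier neighbours of `n` form a clique, and so have different colours, everything cancels except a
contribution of each of these colours. This leaves a factor `q [b_n]` if `v ≠ n`, and the sum over
the neighbours `u < n` of the values for `v = u` if `v = n`. By induction the marked vertex `v`
contributes `q^(n - v) [b_2] ⋯ [b_n]`.
-/

open Finset Function

section Surjections

theorem sum_filter_range_eq {α β γ M : Type*} [Fintype α] [Fintype β] [Fintype γ]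
    [DecidableEq α] [DecidableEq β] [AddCommMonoid M] {e : β → γ}
    (he : Injective e) (g : (α → γ) → M) :
    ∑ κ : α → γ with Set.range κ = Set.range e, g κ =
      ∑ κ : α → β with Surjective κ, g (e ∘ κ) := by
  simp only [sum_filter]
  refine (Fintype.sum_of_injective (e ∘ ·) he.comp_left _ _ (fun κ hκ => if_neg ?_) ?_).symm
  · intro hrange
    have hmem (a : α) : ∃ b, e b = κ a := hrange.le (Set.mem_range_self a)
    choose κ' hκ' using hmem
    exact hκ ⟨κ', funext hκ'⟩
  · intro κ
    refine if_congr ?_ rfl rfl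
    rw [Set.range_comp, ← Set.range_eq_univ, ← he.image_injective.eq_iff, Set.image_univ]

theorem surjective_snoc_iff {α : Type*} {n : ℕ} {κ : Fin n → α} {c : α} :
    Surjective (Fin.snoc κ c : Fin (n + 1) → α) ↔ Surjective κ ∨ Set.range κ = {c}ᶜ := by
  rw [← Set.range_eq_univ, ← Set.range_eq_univ, Fin.range_snoc]
  refine ⟨fun h => ?_, ?_⟩
  · grind
  · rintro (h | h) <;> simp [h, Set.insert_eq]

variable {n : ℕ}

/-- The sum of the weights `Φ k` over the surjective colourings with `k` colours. -/
def surjSum {M : Type*} [AddCommMonoid M] (Φ : ∀ k, (Fin n → Fin k) → M) (k : ℕ) : M :=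
  ∑ κ : Fin n → Fin k with Surjective κ, Φ k κ

/-- The sum of the weights over all surjective colourings, onto any number `k` of colours, with
sign `(-1) ^ (n - k)`; the sign is encoded as `(-1) ^ (n + k)` to avoid subtraction. -/
def altSurjSum {R : Type*} [CommRing R] (Φ : ∀ k, (Fin n → Fin k) → R) : R :=
  ∑ k ∈ range (n + 1), (-1) ^ (n + k) * surjSum Φ k

theorem sum_eq_sum_choose_nsmul_surjSum {M : Type*} [AddCommMonoid M]
    (Φ : ∀ k, (Fin n → Fin k) → M) (N : ℕ)
    (hΦ : ∀ k (e : Fin k ↪o Fin N) (κ : Fin n → Fin k), Φ N (e ∘ κ) = Φ k κ) :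
    ∑ κ, Φ N κ = ∑ k ∈ range (n + 1), N.choose k • surjSum Φ k := by
  have hcard (κ : Fin n → Fin N) : #(univ.image κ) ∈ range (n + 1) := by
    simpa [Nat.lt_succ_iff] using card_image_le (s := univ) (f := κ)
  have himage (k : ℕ) (S : Finset (Fin N)) (hS : #S = k) :
      ∑ κ with univ.image κ = S, Φ N κ = surjSum Φ k := by
    have hrange (κ : Fin n → Fin N) :
        univ.image κ = S ↔ Set.range κ = Set.range (S.orderEmbOfFin hS) := by
      rw [range_orderEmbOfFin, ← coe_inj, coe_image, coe_univ, Set.image_univ]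
    simp only [hrange, sum_filter_range_eq (S.orderEmbOfFin hS).injective, hΦ, surjSum]
  rw [← sum_fiberwise_of_maps_to fun κ _ => hcard κ]
  refine sum_congr rfl fun k _ => ?_
  calc ∑ κ with #(univ.image κ) = k, Φ N κ
      = ∑ S ∈ powersetCard k univ, ∑ κ with univ.image κ = S, Φ N κ := by
        rw [← sum_fiberwise_of_maps_to (t := powersetCard k univ) (g := fun κ => univ.image κ)
          (by simp)]
        refine sum_congr rfl fun S hS => ?_
        rw [filter_filter]
        refine sum_congr (filter_congr fun κ _ => and_iff_right_of_imp ?_) fun _ _ => rfl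
        rintro rfl
        exact (mem_powersetCard.1 hS).2
    _ = N.choose k • surjSum Φ k := by
        rw [sum_congr rfl fun S hS => himage k S (mem_powersetCard.1 hS).2, sum_const,
          card_powersetCard, card_univ, Fintype.card_fin]

theorem surjSum_eq_zero_of_lt {M : Type*} [AddCommMonoid M] (Φ : ∀ k, (Fin n → Fin k) → M) {k : ℕ}
    (h : n < k) : surjSum Φ k = 0 := by
  refine sum_eq_zero fun κ hκ => absurd (Fintype.card_le_of_surjective κ (mem_filter.1 hκ).2) ?_
  simpa using h

theorem surjSum_succ_zero {M : Type*} [AddCommMonoid M] (Φ : ∀ k, (Fin (n + 1) → Fin k) → M) :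
    surjSum Φ 0 = 0 :=
  sum_eq_zero fun κ _ => (κ 0).elim0

/-- The total weight of the extensions of `κ` in which the last vertex takes one of the `k` colours
already available. -/
def joinSum {M : Type*} [AddCommMonoid M] (Φ : ∀ k, (Fin (n + 1) → Fin k) → M) (k : ℕ)
    (κ : Fin n → Fin k) : M :=
  ∑ c, Φ k (Fin.snoc κ c)

/-- The total weight of the extensions of `κ` in which the last vertex forms a colour class of its
own, inserted at any of the `k + 1` positions among the old colours. -/
def openSum {M : Type*} [AddCommMonoid M] (Φ : ∀ k, (Fin (n + 1) → Fin k) → M) (k : ℕ)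
    (κ : Fin n → Fin k) : M :=
  ∑ c : Fin (k + 1), Φ (k + 1) (Fin.snoc (c.succAbove ∘ κ) c)

theorem surjSum_succ {M : Type*} [AddCommMonoid M] (Φ : ∀ k, (Fin (n + 1) → Fin k) → M) (k : ℕ) :
    surjSum Φ (k + 1) = surjSum (joinSum Φ) (k + 1) + surjSum (openSum Φ) k := by
  have hdisj (c : Fin (k + 1)) : Disjoint (univ.filter fun κ : Fin n → Fin (k + 1) => Surjective κ)
      (univ.filter fun κ => Set.range κ = {c}ᶜ) :=
    disjoint_filter.2 fun κ _ hs hr => (hr.le (hs c)) rfl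
  calc surjSum Φ (k + 1)
      = ∑ c, ∑ κ : Fin n → Fin (k + 1) with Surjective κ ∨ Set.range κ = {c}ᶜ,
          Φ (k + 1) (Fin.snoc κ c) := by
        simp_rw [surjSum, sum_filter, ← surjective_snoc_iff]
        rw [← (Fin.snocEquiv fun _ => Fin (k + 1)).sum_comp, Fintype.sum_prod_type]
        rfl
    _ = ∑ c, (∑ κ : Fin n → Fin (k + 1) with Surjective κ, Φ (k + 1) (Fin.snoc κ c) +
          ∑ κ : Fin n → Fin k with Surjective κ, Φ (k + 1) (Fin.snoc (c.succAbove ∘ κ) c)) := by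
        refine sum_congr rfl fun c _ => ?_
        rw [filter_or, sum_union (hdisj c), ← Fin.range_succAbove,
          sum_filter_range_eq Fin.succAbove_right_injective]
    _ = surjSum (joinSum Φ) (k + 1) + surjSum (openSum Φ) k := by
        rw [sum_add_distrib, sum_comm, sum_comm (s := univ) (t := univ.filter _)]
        rfl

theorem altSurjSum_succ {R : Type*} [CommRing R] (Φ : ∀ k, (Fin (n + 1) → Fin k) → R) :
    altSurjSum Φ = altSurjSum fun k κ => openSum Φ k κ - joinSum Φ k κ := by
  have hjoin : surjSum (joinSum Φ) 0 = 0 := by simp [surjSum, joinSum]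
  have hshift : ∑ k ∈ range (n + 1), (-1) ^ (n + k) * surjSum (joinSum Φ) (k + 1) =
      -∑ k ∈ range (n + 1), (-1) ^ (n + k) * surjSum (joinSum Φ) k := by
    rw [sum_range_succ, surjSum_eq_zero_of_lt _ n.lt_succ_self, sum_range_succ', hjoin,
      mul_zero, mul_zero, add_zero, add_zero, ← sum_neg_distrib]
    refine sum_congr rfl fun k _ => ?_
    ring
  have hsub (k : ℕ) : surjSum (fun k κ => openSum Φ k κ - joinSum Φ k κ) k =
      surjSum (openSum Φ) k - surjSum (joinSum Φ) k := sum_sub_distrib _ _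
  have hsign (k : ℕ) : (-1 : R) ^ (n + 1 + (k + 1)) = (-1) ^ (n + k) := by ring
  simp_rw [altSurjSum, hsub, sum_range_succ' _ (n + 1), surjSum_succ_zero, surjSum_succ, hsign,
    mul_add, mul_sub, sum_add_distrib, sum_sub_distrib, hshift]
  ring

theorem altSurjSum_congr {R : Type*} [CommRing R] {Φ Ψ : ∀ k, (Fin n → Fin k) → R}
    (h : ∀ k κ, Surjective κ → Φ k κ = Ψ k κ) : altSurjSum Φ = altSurjSum Ψ :=
  sum_congr rfl fun k _ => congrArg _ <| sum_congr rfl fun κ hκ => h k κ (mem_filter.1 hκ).2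

theorem altSurjSum_const_mul {R : Type*} [CommRing R] (a : R) (Φ : ∀ k, (Fin n → Fin k) → R) :
    altSurjSum (fun k κ => a * Φ k κ) = a * altSurjSum Φ := by
  simp only [altSurjSum, surjSum, mul_sum, mul_left_comm a]

theorem altSurjSum_sum {ι R : Type*} [CommRing R] (s : Finset ι)
    (Φ : ι → ∀ k, (Fin n → Fin k) → R) :
    altSurjSum (fun k κ => ∑ i ∈ s, Φ i k κ) = ∑ i ∈ s, altSurjSum (Φ i) := by
  simp only [altSurjSum, surjSum, mul_sum]
  rw [sum_comm]
  refine sum_congr rfl fun k _ => ?_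
  rw [sum_comm]

end Surjections

section Weights

open Polynomial

variable {n : ℕ}

/-- `κ` is a proper colouring of `G`, in the form in which `cqf` expresses it. -/
def IsProper {V α : Type*} (G : SimpleGraph V) (κ : V → α) : Prop :=
  ∀ i j, G.Adj i j → κ i ≠ κ j

open Classical in
/-- The neighbours of the last vertex of `G`, as vertices of `G` with its last vertex deleted. -/
noncomputable def lastNeighbors (G : SimpleGraph (Fin (n + 1))) : Finset (Fin n) :=
  {j | G.Adj j.castSucc (Fin.last n)}

theorem mem_lastNeighbors {G : SimpleGraph (Fin (n + 1))} {j : Fin n} :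
    j ∈ lastNeighbors G ↔ G.Adj j.castSucc (Fin.last n) := by
  simp [lastNeighbors]

theorem bG_eq_sum (G : SimpleGraph (Fin n)) [DecidableRel G.Adj] (i : Fin n) :
    bG G i = ∑ j, if j < i ∧ G.Adj j i then 1 else 0 := by
  simp [bG, Fintype.card_subtype]

theorem bG_last (G : SimpleGraph (Fin (n + 1))) : bG G (Fin.last n) = #(lastNeighbors G) := by
  classical
  rw [bG_eq_sum, Fin.sum_univ_castSucc]
  simp [Fin.castSucc_lt_last, lastNeighbors]

theorem bG_castSucc (G : SimpleGraph (Fin (n + 1))) (i : Fin n) :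
    bG G i.castSucc = bG (G.comap Fin.castSucc) i := by
  classical
  rw [bG_eq_sum, bG_eq_sum, Fin.sum_univ_castSucc]
  simp [(Fin.le_last _).not_gt]

theorem ascNum_eq_sum (G : SimpleGraph (Fin n)) [DecidableRel G.Adj] {N : ℕ} (κ : Fin n → Fin N) :
    ascNum G κ = ∑ i, ∑ j, if i < j ∧ G.Adj i j ∧ κ i < κ j then 1 else 0 := by
  rw [← Fintype.sum_prod_type' fun i j => if i < j ∧ G.Adj i j ∧ κ i < κ j then 1 else 0]
  simp [ascNum, Fintype.card_subtype]

theorem ascNum_snoc (G : SimpleGraph (Fin (n + 1))) {N : ℕ} (κ : Fin n → Fin N) (c : Fin N) :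
    ascNum G (Fin.snoc κ c) =
      ascNum (G.comap Fin.castSucc) κ + #{j ∈ lastNeighbors G | κ j < c} := by
  classical
  rw [ascNum_eq_sum, ascNum_eq_sum, Fin.sum_univ_castSucc]
  simp_rw [Fin.sum_univ_castSucc, sum_add_distrib]
  simp [(Fin.le_last _).not_gt, Fin.castSucc_lt_last, lastNeighbors, filter_filter]

theorem ascNum_orderEmbedding_comp (G : SimpleGraph (Fin n)) {N M : ℕ} (e : Fin N ↪o Fin M)
    (κ : Fin n → Fin N) : ascNum G (e ∘ κ) = ascNum G κ := by
  simp [ascNum]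

theorem isProper_comp_iff {V α β : Type*} {G : SimpleGraph V} {e : α → β} (he : Injective e)
    {κ : V → α} : IsProper G (e ∘ κ) ↔ IsProper G κ := by
  simp [IsProper, he.eq_iff]

theorem isProper_snoc_iff {α : Type*} [DecidableEq α] {G : SimpleGraph (Fin (n + 1))}
    {κ : Fin n → α} {c : α} :
    IsProper G (Fin.snoc κ c : Fin (n + 1) → α) ↔
      IsProper (G.comap Fin.castSucc) κ ∧ c ∉ (lastNeighbors G).image κ := by
  simp only [IsProper, Fin.forall_fin_succ', Fin.snoc_castSucc, Fin.snoc_last,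
    SimpleGraph.comap_adj, mem_image, mem_lastNeighbors, G.adj_comm (Fin.last n)]
  grind [SimpleGraph.irrefl]

theorem IsNUIG.comap_castSucc {G : SimpleGraph (Fin (n + 1))} (hG : IsNUIG G) :
    IsNUIG (G.comap Fin.castSucc) := fun _ _ _ hij hjk =>
  hG _ _ _ (Fin.castSucc_lt_castSucc_iff.2 hij) (Fin.castSucc_lt_castSucc_iff.2 hjk)

theorem IsNUIG.isUpperSet_lastNeighbors {G : SimpleGraph (Fin (n + 1))} (hG : IsNUIG G) :
    IsUpperSet (lastNeighbors G : Set (Fin n)) := by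
  intro i j hij hi
  simp only [mem_coe, mem_lastNeighbors] at hi ⊢
  obtain rfl | hij := hij.eq_or_lt
  · exact hi
  · exact (hG _ _ _ (Fin.castSucc_lt_castSucc_iff.2 hij) (Fin.castSucc_lt_last j) hi).2

theorem IsNUIG.isClique_lastNeighbors {G : SimpleGraph (Fin (n + 1))} (hG : IsNUIG G) :
    (G.comap Fin.castSucc).IsClique (lastNeighbors G : Set (Fin n)) := by
  have hadj {i j : Fin n} (hij : i < j) (hi : i ∈ lastNeighbors G) :
      G.Adj i.castSucc j.castSucc :=
    (hG _ _ _ (Fin.castSucc_lt_castSucc_iff.2 hij) (Fin.castSucc_lt_last j)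
      (mem_lastNeighbors.1 hi)).1
  intro i hi j hj hij
  obtain hij | hij := hij.lt_or_gt
  · exact hadj hij hi
  · exact (hadj hij hj).symm

theorem IsProper.injOn {V α : Type*} {G : SimpleGraph V} {κ : V → α} (hκ : IsProper G κ)
    {s : Set V} (hs : G.IsClique s) : Set.InjOn κ s := fun i hi j hj hij =>
  by_contra fun hne => hκ i j (hs hi hj hne) hij

open Classical in
/-- The coefficient `q ^ asc κ` with which a colouring enters `X_G`, zero unless `κ` is proper. -/
noncomputable def ascWeight (G : SimpleGraph (Fin n)) {N : ℕ} (κ : Fin n → Fin N) : ℤ[X] :=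
  if IsProper G κ then X ^ ascNum G κ else 0

theorem ascWeight_orderEmbedding_comp (G : SimpleGraph (Fin n)) {N M : ℕ} (e : Fin N ↪o Fin M)
    (κ : Fin n → Fin N) : ascWeight G (e ∘ κ) = ascWeight G κ := by
  classical
  simp only [ascWeight, isProper_comp_iff e.injective, ascNum_orderEmbedding_comp]

theorem ascWeight_snoc (G : SimpleGraph (Fin (n + 1))) {N : ℕ} (κ : Fin n → Fin N) (c : Fin N) :
    ascWeight G (Fin.snoc κ c) = (if c ∈ (lastNeighbors G).image κ then 0 else
      X ^ #{j ∈ lastNeighbors G | κ j < c}) * ascWeight (G.comap Fin.castSucc) κ := by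
  classical
  simp only [ascWeight, isProper_snoc_iff, ascNum_snoc, pow_add]
  grind

theorem ascWeight_snoc_succAbove (G : SimpleGraph (Fin (n + 1))) {N : ℕ} (κ : Fin n → Fin N)
    (c : Fin (N + 1)) : ascWeight G (Fin.snoc (c.succAbove ∘ κ) c) =
      X ^ #{j ∈ lastNeighbors G | (κ j).castSucc < c} * ascWeight (G.comap Fin.castSucc) κ := by
  rw [ascWeight_snoc, if_neg (by simp [Fin.succAbove_ne])]
  simp only [comp_apply, Fin.succAbove_lt_iff_castSucc_lt]
  rw [show c.succAbove ∘ κ = Fin.succAboveOrderEmb c ∘ κ from rfl, ascWeight_orderEmbedding_comp]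

/-- The weight `ascWeight` restricted to colourings with `v` in the smallest colour class. -/
noncomputable def minWeight (G : SimpleGraph (Fin n)) (v : Fin n) (N : ℕ) (κ : Fin n → Fin N) :
    ℤ[X] :=
  if ∀ w, κ v ≤ κ w then ascWeight G κ else 0

theorem minWeight_orderEmbedding_comp (G : SimpleGraph (Fin n)) (v : Fin n) {N M : ℕ}
    (e : Fin N ↪o Fin M) (κ : Fin n → Fin N) :
    minWeight G v M (e ∘ κ) = minWeight G v N κ := by
  simp [minWeight, ascWeight_orderEmbedding_comp]

theorem sum_X_pow_card_filter_lt {α : Type*} [LinearOrder α] (P : Finset α) :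
    ∑ c ∈ P, (X : ℤ[X]) ^ #{p ∈ P | p < c} = qint #P := by
  induction P using Finset.induction_on_max with
  | empty => simp [qint]
  | insert a s ha ih =>
    have has : a ∉ s := fun h => (ha a h).false
    have hlt {c : α} (hc : c ∈ s) : {p ∈ insert a s | p < c} = {p ∈ s | p < c} := by
      rw [filter_insert, if_neg (ha c hc).not_gt]
    have hmax : {p ∈ insert a s | p < a} = s := by
      rw [filter_insert, if_neg (lt_irrefl a), filter_true_of_mem ha]
    rw [sum_insert has, hmax, sum_congr rfl fun c hc => by rw [hlt hc], ih,
      card_insert_of_notMem has, qint, qint, sum_range_succ, add_comm]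

theorem sum_X_pow_card_filter_gt {α : Type*} [LinearOrder α] (P : Finset α) :
    ∑ c ∈ P, (X : ℤ[X]) ^ #{p ∈ P | c < p} = qint #P :=
  sum_X_pow_card_filter_lt (α := αᵒᵈ) P

theorem sum_X_pow_card_filter_le {α : Type*} [LinearOrder α] (P : Finset α) :
    ∑ c ∈ P, (X : ℤ[X]) ^ #{p ∈ P | p ≤ c} = X * qint #P := by
  rw [← sum_X_pow_card_filter_lt, mul_sum]
  refine sum_congr rfl fun c hc => ?_
  have : {p ∈ P | p ≤ c} = insert c {p ∈ P | p < c} := by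
    ext p; simp only [mem_filter, mem_insert, le_iff_eq_or_lt]; grind
  rw [this, card_insert_of_notMem (by simp), pow_succ']

theorem minWeight_snoc_castSucc (G : SimpleGraph (Fin (n + 1))) (u : Fin n) {N : ℕ}
    (κ : Fin n → Fin N) (c : Fin N) :
    minWeight G u.castSucc N (Fin.snoc κ c) =
      if (∀ w, κ u ≤ κ w) ∧ κ u ≤ c then ascWeight G (Fin.snoc κ c) else 0 := by
  simp [minWeight, Fin.forall_fin_succ']

theorem minWeight_snoc_last (G : SimpleGraph (Fin (n + 1))) {N : ℕ} (κ : Fin n → Fin N)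
    (c : Fin N) :
    minWeight G (Fin.last n) N (Fin.snoc κ c) =
      if ∀ w, c ≤ κ w then ascWeight G (Fin.snoc κ c) else 0 := by
  simp [minWeight, Fin.forall_fin_succ']

theorem openSum_minWeight_castSucc (G : SimpleGraph (Fin (n + 1))) (u : Fin n) {k : ℕ}
    (κ : Fin n → Fin k) :
    openSum (minWeight G u.castSucc) k κ = (∑ c with κ u ≤ c,
      X ^ #{j ∈ lastNeighbors G | κ j ≤ c}) * minWeight (G.comap Fin.castSucc) u k κ := by
  have hzero : ¬ (0 : Fin (k + 1)).succAbove (κ u) ≤ 0 := by simp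
  have hle (c : Fin k) : c.succ.succAbove (κ u) ≤ c.succ ↔ κ u ≤ c := by
    rw [(Fin.succAbove_ne _ _).le_iff_lt, Fin.succAbove_lt_iff_castSucc_lt,
      Fin.castSucc_lt_succ_iff]
  simp only [openSum, Fin.sum_univ_succ, minWeight_snoc_castSucc, comp_apply, hzero, and_false,
    if_false, zero_add, hle, ascWeight_snoc_succAbove, Fin.castSucc_lt_succ_iff, sum_filter,
    sum_mul, Fin.succAbove_le_succAbove_iff]
  refine sum_congr rfl fun c _ => ?_
  rw [minWeight]
  grind

theorem joinSum_minWeight_castSucc (G : SimpleGraph (Fin (n + 1))) (u : Fin n) {k : ℕ}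
    (κ : Fin n → Fin k) :
    joinSum (minWeight G u.castSucc) k κ = (∑ c with κ u ≤ c,
      if c ∈ (lastNeighbors G).image κ then 0 else X ^ #{j ∈ lastNeighbors G | κ j < c}) *
        minWeight (G.comap Fin.castSucc) u k κ := by
  simp only [joinSum, minWeight_snoc_castSucc, ascWeight_snoc, sum_filter, sum_mul]
  refine sum_congr rfl fun c _ => ?_
  rw [minWeight]
  grind

theorem openSum_sub_joinSum_minWeight_castSucc {G : SimpleGraph (Fin (n + 1))} (hG : IsNUIG G)
    (u : Fin n) {k : ℕ} (κ : Fin n → Fin k) :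
    openSum (minWeight G u.castSucc) k κ - joinSum (minWeight G u.castSucc) k κ =
      X * qint #(lastNeighbors G) * minWeight (G.comap Fin.castSucc) u k κ := by
  rw [openSum_minWeight_castSucc, joinSum_minWeight_castSucc, ← sub_mul]
  by_cases h : (∀ w, κ u ≤ κ w) ∧ IsProper (G.comap Fin.castSucc) κ
  swap
  · have : minWeight (G.comap Fin.castSucc) u k κ = 0 := by
      simp only [minWeight, ascWeight]; grind
    rw [this, mul_zero, mul_zero]
  obtain ⟨hmin, hproper⟩ := h
  congr 1
  have hinj := hproper.injOn hG.isClique_lastNeighbors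
  rw [← card_image_of_injOn hinj, ← sum_X_pow_card_filter_le, ← sum_sub_distrib]
  refine Eq.symm (sum_subset_zero_on_sdiff (fun c hc => ?_) (fun c hc => ?_) fun c hc => ?_)
  · obtain ⟨j, -, rfl⟩ := mem_image.1 hc
    simpa using hmin j
  · have hne : ∀ j ∈ lastNeighbors G, κ j ≠ c := by simpa using (mem_sdiff.1 hc).2
    rw [if_neg (mem_sdiff.1 hc).2, filter_congr fun j hj => (hne j hj).le_iff_lt, sub_self]
  · rw [if_pos hc, sub_zero, filter_image,
      card_image_of_injOn (hinj.mono (coe_subset.2 (filter_subset _ _)))]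

theorem openSum_sub_joinSum_minWeight_last {G : SimpleGraph (Fin (n + 2))} (hG : IsNUIG G)
    {k : ℕ} {κ : Fin (n + 1) → Fin k} (hκ : Surjective κ) :
    openSum (minWeight G (Fin.last (n + 1))) k κ - joinSum (minWeight G (Fin.last (n + 1))) k κ =
      ∑ u ∈ lastNeighbors G, minWeight (G.comap Fin.castSucc) u k κ := by
  obtain _ | k := k
  · exact (κ 0).elim0
  have hmin (c : Fin (k + 1)) : (∀ w, c ≤ κ w) ↔ c = 0 := by
    rw [← hκ.forall (p := (c ≤ ·))]
    exact ⟨fun h => Fin.le_zero_iff.1 (h 0), by rintro rfl; exact Fin.zero_le⟩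
  have hmin' (c : Fin (k + 2)) : (∀ w, c ≤ c.succAbove (κ w)) ↔ c = 0 := by
    rw [← hκ.forall (p := fun x => c ≤ c.succAbove x)]
    refine ⟨fun h => by_contra fun hc => ?_, by rintro rfl; exact fun _ => Fin.zero_le _⟩
    exact (h 0).not_gt ((Fin.succAbove_lt_iff_castSucc_lt _ _).2 (Fin.pos_iff_ne_zero.2 hc))
  have hopen : openSum (minWeight G (Fin.last (n + 1))) (k + 1) κ =
      ascWeight (G.comap Fin.castSucc) κ := by
    simp [openSum, minWeight_snoc_last, hmin', ascWeight_snoc_succAbove]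
  have hjoin : joinSum (minWeight G (Fin.last (n + 1))) (k + 1) κ =
      if 0 ∈ (lastNeighbors G).image κ then 0 else ascWeight (G.comap Fin.castSucc) κ := by
    simp [joinSum, minWeight_snoc_last, hmin, ascWeight_snoc]
  simp only [hopen, hjoin, minWeight, hmin]
  by_cases hproper : IsProper (G.comap Fin.castSucc) κ
  · rw [← sum_image (f := fun x => if x = 0 then ascWeight (G.comap Fin.castSucc) κ else 0)
      (hproper.injOn hG.isClique_lastNeighbors), sum_ite_eq']
    split_ifs <;> simp
  · simp [ascWeight, hproper]

theorem altSurjSum_minWeight_castSucc {G : SimpleGraph (Fin (n + 1))} (hG : IsNUIG G)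
    (u : Fin n) :
    altSurjSum (minWeight G u.castSucc) =
      X * qint #(lastNeighbors G) * altSurjSum (minWeight (G.comap Fin.castSucc) u) := by
  rw [altSurjSum_succ, ← altSurjSum_const_mul]
  exact altSurjSum_congr fun k κ _ => openSum_sub_joinSum_minWeight_castSucc hG u κ

theorem altSurjSum_minWeight_last {G : SimpleGraph (Fin (n + 2))} (hG : IsNUIG G) :
    altSurjSum (minWeight G (Fin.last (n + 1))) =
      ∑ u ∈ lastNeighbors G, altSurjSum (minWeight (G.comap Fin.castSucc) u) := by
  rw [altSurjSum_succ, ← altSurjSum_sum]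
  exact altSurjSum_congr fun k κ hκ => openSum_sub_joinSum_minWeight_last hG hκ

theorem altSurjSum_minWeight_fin_one (G : SimpleGraph (Fin 1)) (v : Fin 1) :
    altSurjSum (minWeight G v) = 1 := by
  have hweight (κ : Fin 1 → Fin 1) : minWeight G v 1 κ = 1 := by
    simp [minWeight, ascWeight, IsProper, ascNum, Subsingleton.elim _ (0 : Fin 1)]
  rw [altSurjSum_succ]
  have hsurj (κ : Fin 0 → Fin 0) : Surjective κ := fun b => b.elim0
  simp [altSurjSum, surjSum, openSum, joinSum, hweight, hsurj]

theorem sum_X_pow_sub_of_isUpperSet {s : Finset (Fin (n + 1))}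
    (hs : IsUpperSet (s : Set (Fin (n + 1)))) :
    ∑ u ∈ s, (X : ℤ[X]) ^ (n - u : ℕ) = qint #s := by
  rw [← sum_X_pow_card_filter_gt]
  refine sum_congr rfl fun u hu => ?_
  have hIoi : {p ∈ s | u < p} = Ioi u := by
    ext p
    simpa using fun hup : u < p => hs hup.le hu
  rw [hIoi, Fin.card_Ioi, Nat.add_sub_cancel]

theorem altSurjSum_minWeight {G : SimpleGraph (Fin (n + 1))} (hG : IsNUIG G) (v : Fin (n + 1)) :
    altSurjSum (minWeight G v) = X ^ (n - v : ℕ) * ∏ i : Fin n, qint (bG G i.succ) := by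
  induction n with
  | zero => simp [altSurjSum_minWeight_fin_one]
  | succ n ih =>
    have hprod : ∏ i : Fin (n + 1), qint (bG G i.succ) =
        (∏ i : Fin n, qint (bG (G.comap Fin.castSucc) i.succ)) * qint #(lastNeighbors G) := by
      simp_rw [Fin.prod_univ_castSucc, ← Fin.castSucc_succ, bG_castSucc, Fin.succ_last, bG_last]
    rw [hprod]
    cases v using Fin.lastCases with
    | last =>
      rw [altSurjSum_minWeight_last hG]
      simp_rw [ih hG.comap_castSucc]
      rw [← sum_mul, sum_X_pow_sub_of_isUpperSet hG.isUpperSet_lastNeighbors]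
      simp [mul_comm]
    | cast u =>
      rw [altSurjSum_minWeight_castSucc hG, ih hG.comap_castSucc, Fin.val_castSucc,
        Nat.succ_sub u.is_le, pow_succ]
      ring

theorem sum_altSurjSum_minWeight {G : SimpleGraph (Fin (n + 1))} (hG : IsNUIG G) :
    ∑ v, altSurjSum (minWeight G v) = qint (n + 1) * ∏ i : Fin n, qint (bG G i.succ) := by
  simp_rw [altSurjSum_minWeight hG, ← sum_mul]
  rw [sum_X_pow_sub_of_isUpperSet (by simpa using isUpperSet_univ), card_univ, Fintype.card_fin]

end Weights

section HeadDerivative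

open Polynomial

/-- The functional `f ↦ ∂f/∂x_0 (1, …, 1)` on polynomials in `x_0, …, x_m`, computed as the
derivative at `t = 1` along `t ↦ (t, 1, …, 1)`. -/
noncomputable def headDeriv (R : Type*) [CommSemiring R] (m : ℕ) :
    MvPolynomial (Fin (m + 1)) R →ₗ[R] R :=
  leval 1 ∘ₗ derivative ∘ₗ
    (MvPolynomial.aeval (Fin.cons X fun _ => 1 : Fin (m + 1) → R[X])).toLinearMap

theorem headDeriv_prod_X {R : Type*} [CommSemiring R] {ι : Type*} [Fintype ι] {m : ℕ}
    (κ : ι → Fin (m + 1)) :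
    headDeriv R m (∏ i, MvPolynomial.X (κ i)) = (#{i | κ i = 0} : R) := by
  have hvar (c : Fin (m + 1)) :
      (Fin.cons X fun _ => 1 : Fin (m + 1) → R[X]) c = if c = 0 then X else 1 := by
    cases c using Fin.cases <;> simp
  simp [headDeriv, hvar, prod_ite, leval, derivative_X_pow]

theorem esymm_replicate_one {R : Type*} [CommSemiring R] (m a : ℕ) :
    (Multiset.replicate m (1 : R)).esymm a = m.choose a := by
  have hprod : ∀ t ∈ Multiset.powersetCard a (Multiset.replicate m (1 : R)), t.prod = 1 :=
    fun t ht => Multiset.prod_eq_one fun x hx =>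
      Multiset.eq_of_mem_replicate (Multiset.mem_of_le (Multiset.mem_powersetCard.1 ht).1 hx)
  rw [Multiset.esymm, Multiset.map_congr rfl hprod]
  simp

theorem esymm_cons_succ {R : Type*} [CommSemiring R] (x : R) (s : Multiset R) (a : ℕ) :
    (x ::ₘ s).esymm (a + 1) = s.esymm (a + 1) + x * s.esymm a := by
  simp [Multiset.esymm, Multiset.powersetCard_cons, Multiset.map_map,
    Multiset.sum_map_mul_left]

theorem aeval_cons_one_esymm {R : Type*} [CommRing R] (m a : ℕ) :
    MvPolynomial.aeval (Fin.cons X fun _ => 1 : Fin (m + 1) → R[X])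
        (MvPolynomial.esymm (Fin (m + 1)) R a) =
      (m.choose a : R[X]) + X * ((m + 1).choose a - m.choose a : R[X]) := by
  rw [MvPolynomial.aeval_esymm_eq_multiset_esymm]
  obtain _ | a := a
  · simp [Multiset.esymm]
  have hval : univ.val.map (Fin.cons X fun _ => 1 : Fin (m + 1) → R[X]) =
      X ::ₘ Multiset.replicate m 1 := by
    simp [Fin.univ_succ, comp_def, ← Multiset.coe_replicate]
  rw [hval, esymm_cons_succ, esymm_replicate_one, esymm_replicate_one, Nat.choose_succ_succ,
    Nat.cast_add, add_sub_cancel_right]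

/-- The value of `headDeriv` on the product of the elementary symmetric polynomials `e_a`, `a ∈ s`,
in `r + 1` variables. It is defined for `r` in any binomial ring, so that `r` can be `-1` or an
indeterminate. -/
noncomputable def esymmHeadDeriv {R : Type*} [CommRing R] [BinomialRing R] (s : Multiset ℕ)
    (r : R) : R :=
  (s.map fun a => ((s.erase a).map fun b => Ring.choose (r + 1) b).prod *
    (Ring.choose (r + 1) a - Ring.choose r a)).sum

theorem esymmHeadDeriv_singleton {R : Type*} [CommRing R] [BinomialRing R] (a : ℕ) (r : R) :
    esymmHeadDeriv {a} r = Ring.choose (r + 1) a - Ring.choose r a := by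
  simp [esymmHeadDeriv]

theorem map_esymmHeadDeriv {R S : Type*} [CommRing R] [BinomialRing R] [CommRing S]
    [BinomialRing S] (f : R →+* S) (s : Multiset ℕ) (r : R) :
    f (esymmHeadDeriv s r) = esymmHeadDeriv s (f r) := by
  simp [esymmHeadDeriv, map_multiset_sum, map_multiset_prod, Multiset.map_map,
    Ring.map_choose]

theorem ring_choose_natCast_add_one {R : Type*} [Ring R] [BinomialRing R] (m b : ℕ) :
    Ring.choose ((m : R) + 1) b = (m + 1).choose b := by
  rw [← Nat.cast_add_one, Ring.choose_natCast]

theorem headDeriv_prod_esymm {R : Type*} [CommRing R] (m : ℕ) (s : Multiset ℕ) :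
    headDeriv R m (s.map (MvPolynomial.esymm (Fin (m + 1)) R)).prod =
      (esymmHeadDeriv s (m : ℤ) : ℤ) := by
  simp [headDeriv, map_multiset_prod, Multiset.map_map, comp_def, aeval_cons_one_esymm,
    derivative_prod, leval, esymmHeadDeriv, eval_multisetSum, eval_multiset_prod,
    ring_choose_natCast_add_one, Ring.choose_natCast, Int.cast_multiset_sum, Int.cast_multiset_prod]

theorem esymmHeadDeriv_singleton_neg_one {R : Type*} [CommRing R] [BinomialRing R] {a : ℕ}
    (ha : 0 < a) : esymmHeadDeriv {a} (-1 : R) = -(-1) ^ a := by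
  have hchoose : Ring.choose (-1 : R) a = (-1) ^ a := by
    simp [Ring.choose_neg, Ring.choose_natCast, Int.negOnePow_def, Units.smul_def]
  rw [esymmHeadDeriv_singleton, neg_add_cancel, Ring.choose_zero_pos R ha, hchoose, zero_sub]

theorem esymmHeadDeriv_neg_one_of_one_lt_card {R : Type*} [CommRing R] [BinomialRing R]
    {s : Multiset ℕ} (hs : ∀ a ∈ s, 0 < a) (hcard : 1 < s.card) :
    esymmHeadDeriv s (-1 : R) = 0 := by
  refine Multiset.sum_eq_zero fun x hx => ?_
  obtain ⟨a, ha, rfl⟩ := Multiset.mem_map.1 hx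
  obtain ⟨b, hb⟩ : ∃ b, b ∈ s.erase a := by
    rw [← Multiset.card_pos_iff_exists_mem, Multiset.card_erase_of_mem ha]
    exact Nat.pred_lt_pred zero_lt_one.ne' hcard
  have hchoose : Ring.choose (0 : R) b = 0 :=
    Ring.choose_zero_pos R (hs b (Multiset.mem_of_mem_erase hb))
  rw [neg_add_cancel, Multiset.prod_eq_zero (Multiset.mem_map.2 ⟨b, hb, hchoose⟩), zero_mul]

theorem sum_mul_esymmHeadDeriv_eq_of_nat {R ι ι' : Type*} [CommRing R] [IsDomain R] [CharZero R]
    {s : Finset ι} {t : Finset ι'} {a : ι → R} {b : ι' → R} {S : ι → Multiset ℕ}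
    {T : ι' → Multiset ℕ}
    (h : ∀ m : ℕ, ∑ i ∈ s, a i * (esymmHeadDeriv (S i) (m : ℤ) : ℤ) =
      ∑ j ∈ t, b j * (esymmHeadDeriv (T j) (m : ℤ) : ℤ)) (z : ℤ) :
    ∑ i ∈ s, a i * (esymmHeadDeriv (S i) z : ℤ) =
      ∑ j ∈ t, b j * (esymmHeadDeriv (T j) z : ℤ) := by
  let K := FractionRing R
  have : CharZero K := charZero_of_injective_algebraMap (IsFractionRing.injective R K)
  have heval (U : Multiset ℕ) (z : ℤ) :
      (esymmHeadDeriv U (X : K[X])).eval (z : K) = (esymmHeadDeriv U z : ℤ) := by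
    rw [← coe_evalRingHom, map_esymmHeadDeriv, coe_evalRingHom, eval_X, ← eq_intCast
      (Int.castRingHom K), ← eq_intCast (Int.castRingHom K), map_esymmHeadDeriv]
  have hinf : (Set.range ((↑) : ℕ → K)).Infinite :=
    Set.infinite_range_of_injective Nat.cast_injective
  have hpoly : ∑ i ∈ s, C (algebraMap R K (a i)) * esymmHeadDeriv (S i) X =
      ∑ j ∈ t, C (algebraMap R K (b j)) * esymmHeadDeriv (T j) X := by
    refine eq_of_infinite_eval_eq _ _ (hinf.mono ?_)
    rintro _ ⟨m, rfl⟩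
    have := congrArg (algebraMap R K) (h m)
    simp only [map_sum, map_mul, map_intCast] at this
    simpa [eval_finsetSum, ← heval] using this
  apply IsFractionRing.injective R K
  simpa [eval_finsetSum, heval] using congrArg (Polynomial.eval (z : K)) hpoly

end HeadDerivative

section Extraction

variable {n : ℕ}

theorem cqf_eq_sum (G : SimpleGraph (Fin n)) (N : ℕ) :
    cqf G N = ∑ κ : Fin n → Fin N,
      MvPolynomial.C (ascWeight G κ) * ∏ i, MvPolynomial.X (κ i) := by
  classical
  rw [cqf, finsum_eq_sum_of_fintype]
  refine sum_congr rfl fun κ _ => ?_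
  rw [finsum_eq_if]
  by_cases h : IsProper G κ
  · rw [ascWeight, if_pos h]
    exact if_pos h
  · rw [ascWeight, if_neg h, map_zero, zero_mul]
    exact if_neg h

theorem sum_minWeight_succ (G : SimpleGraph (Fin n)) (v : Fin n) (m : ℕ) :
    ∑ κ, minWeight G v (m + 1) κ =
      ∑ κ : Fin n → Fin (m + 1) with κ v = 0, ascWeight G κ + ∑ κ, minWeight G v m κ := by
  rw [← sum_filter_add_sum_filter_not univ (fun κ : Fin n → Fin (m + 1) => κ v = 0)]
  congr 1
  · refine sum_congr rfl fun κ hκ => if_pos fun w => ?_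
    rw [(mem_filter.1 hκ).2]
    exact Fin.zero_le _
  · rw [sum_filter]
    refine (Fintype.sum_of_injective (Fin.succ ∘ ·) (Fin.succ_injective m).comp_left _ _
      (fun κ hκ => ?_) fun κ => ?_).symm
    · rw [ite_eq_right_iff]
      refine fun hv => if_neg fun hmin => hκ ?_
      have hne (w : Fin n) : κ w ≠ 0 := fun hw => hv (Fin.le_zero_iff.1 (hw ▸ hmin w))
      exact ⟨fun w => (κ w).pred (hne w), funext fun w => Fin.succ_pred _ _⟩
    · exact (minWeight_orderEmbedding_comp G v (Fin.succOrderEmb m) κ).symm.trans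
        (if_pos (Fin.succ_ne_zero _)).symm

theorem sum_minWeight_eq (G : SimpleGraph (Fin n)) (v : Fin n) (N : ℕ) :
    ∑ κ, minWeight G v N κ = ∑ k ∈ range (n + 1), N.choose k • surjSum (minWeight G v) k :=
  sum_eq_sum_choose_nsmul_surjSum _ _ fun _ e κ => minWeight_orderEmbedding_comp G v e κ

theorem headDeriv_cqf (G : SimpleGraph (Fin n)) (m : ℕ) :
    headDeriv _ m (cqf G (m + 1)) = ∑ k ∈ range (n + 1),
      (∑ v, surjSum (minWeight G v) k) * (esymmHeadDeriv {k} (m : ℤ) : ℤ) := by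
  have hhead (v : Fin n) : ∑ κ : Fin n → Fin (m + 1) with κ v = 0, ascWeight G κ =
      ∑ k ∈ range (n + 1), surjSum (minWeight G v) k * (esymmHeadDeriv {k} (m : ℤ) : ℤ) := by
    rw [← add_sub_cancel_right (∑ κ : Fin n → Fin (m + 1) with κ v = 0, ascWeight G κ),
      ← sum_minWeight_succ, sum_minWeight_eq, sum_minWeight_eq, ← sum_sub_distrib]
    refine sum_congr rfl fun k _ => ?_
    rw [esymmHeadDeriv_singleton, ring_choose_natCast_add_one, Ring.choose_natCast, nsmul_eq_mul,
      nsmul_eq_mul, ← sub_mul, mul_comm]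
    norm_cast
  simp_rw [sum_mul]
  rw [sum_comm, ← sum_congr rfl fun v _ => hhead v, cqf_eq_sum, map_sum]
  simp only [MvPolynomial.C_mul', map_smul, headDeriv_prod_X, smul_eq_mul, ← sum_boole, mul_sum]
  rw [sum_comm]
  simp [sum_filter]

theorem one_lt_card_parts_of_ne_indiscrete (hn : n ≠ 0) {μ : n.Partition}
    (hμ : μ ≠ .indiscrete n) : 1 < μ.parts.card := by
  rw [Nat.one_lt_iff_ne_zero_and_ne_one]
  refine ⟨fun h => hn ?_, fun h => hμ ?_⟩
  · simpa [Multiset.card_eq_zero.1 h] using μ.parts_sum.symm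
  · obtain ⟨a, ha⟩ := Multiset.card_eq_one.1 h
    have han : a = n := by simpa [ha] using μ.parts_sum
    ext1
    rw [ha, han, Nat.Partition.indiscrete_parts hn]

theorem sum_altSurjSum_minWeight_eq_coeff (G : SimpleGraph (Fin (n + 1)))
    (c : (n + 1).Partition → Polynomial ℤ)
    (hc : ∀ N : ℕ, cqf G N = ∑ μ, MvPolynomial.C (c μ) *
      MvPolynomial.esymmPart (Fin N) (Polynomial ℤ) μ) :
    ∑ v, altSurjSum (minWeight G v) = c (.indiscrete (n + 1)) := by
  have hnat (m : ℕ) : ∑ k ∈ range (n + 2), (∑ v, surjSum (minWeight G v) k) *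
      (esymmHeadDeriv {k} (m : ℤ) : ℤ) = ∑ μ, c μ * (esymmHeadDeriv μ.parts (m : ℤ) : ℤ) := by
    rw [← headDeriv_cqf, hc]
    simp [MvPolynomial.C_mul', MvPolynomial.esymmPart, headDeriv_prod_esymm]
  have hneg := sum_mul_esymmHeadDeriv_eq_of_nat hnat (-1)
  have hone (k : ℕ) : (∑ v, surjSum (minWeight G v) k) * (esymmHeadDeriv {k} (-1 : ℤ) : ℤ) =
      -((-1) ^ k * ∑ v, surjSum (minWeight G v) k) := by
    obtain rfl | hk := k.eq_zero_or_pos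
    · simp [surjSum_succ_zero]
    · simp [esymmHeadDeriv_singleton_neg_one hk, mul_comm]
  have htop : ∑ μ, c μ * (esymmHeadDeriv μ.parts (-1 : ℤ) : ℤ) =
      -((-1) ^ (n + 1) * c (.indiscrete (n + 1))) := by
    rw [sum_eq_single_of_mem (.indiscrete (n + 1)) (mem_univ _) fun μ _ hμ => by
      rw [esymmHeadDeriv_neg_one_of_one_lt_card (fun _ => μ.parts_pos)
        (one_lt_card_parts_of_ne_indiscrete n.succ_ne_zero hμ), Int.cast_zero, mul_zero]]
    simp [esymmHeadDeriv_singleton_neg_one, mul_comm]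
  simp_rw [hone, htop, sum_neg_distrib, neg_inj] at hneg
  simp_rw [altSurjSum, pow_add _ (n + 1), mul_assoc]
  rw [sum_comm]
  simp_rw [← mul_sum]
  rw [hneg, ← mul_assoc, ← mul_pow]
  simp

end Extraction

/-- if `X_G(x;q) = Σ_μ c_μ(q) e_μ` is the elementary symmetric function
expansion for a natural unit interval graph `G` on `[n]`, then the coefficient of `e_n`
(the one-part partition) is `[n]_q [b_2]_q ⋯ [b_n]_q`. -/
theorem coeff_esymm_top_part {n : ℕ} (hn : 0 < n) (G : SimpleGraph (Fin n))
    (hG : IsNUIG G) (c : Nat.Partition n → Polynomial ℤ)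
    (hc : ∀ N : ℕ, cqf G N = ∑ μ : Nat.Partition n,
      MvPolynomial.C (c μ) * MvPolynomial.esymmPart (Fin N) (Polynomial ℤ) μ) :
    c (Nat.Partition.indiscrete n) =
      qint n * ∏ i ∈ Finset.univ.filter (fun i : Fin n => (i : ℕ) ≠ 0), qint (bG G i) := by
  obtain ⟨n, rfl⟩ := Nat.exists_eq_add_one.2 hn
  rw [← sum_altSurjSum_minWeight_eq_coeff G c hc, sum_altSurjSum_minWeight hG, prod_filter,
    Fin.prod_univ_succ]
  simp
end

section
/- The chromatic quasisymmetric function of the K-chain K_{a,b} (two complete graphs of sizes a and b glued at a single vertex, with n = a+b-1 vertices) is X_{K_{ab}}(x;q) = [a-1]_q! [b-1]_q! · Σ_{k=max(a,b)}^{n} q^{n-k} [2k-n]_q · e_{(k, n-k)}. In particular it is e-positive and e-unimodal. -/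
noncomputable def qfact : ℕ → Polynomial ℤ
  | 0 => 1
  | n + 1 => qint (n + 1) * qfact n

/-- The K-chain `K_{ab}` on `a + b - 1` vertices: a complete graph on the first `a`
vertices `{1,…,a}` and a complete graph on the last `b` vertices `{a,…,a+b-1}`, glued at
the vertex `a`. -/
def KChain2 (a b : ℕ) : SimpleGraph (Fin (a + b - 1)) :=
  SimpleGraph.fromRel (fun i j =>
    ((i : ℕ) < a ∧ (j : ℕ) < a) ∨ (a ≤ (i : ℕ) + 1 ∧ a ≤ (j : ℕ) + 1))

/-!
Colour the glued vertex by `c`. The two cliques then separate, and each of them is a chromatic sum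
of a complete graph in which the weight `w i` of a colour is multiplied by `q` when its edge to the
glued vertex is an ascent, and by `0` when `i = c`. Up to `q`-factorials such a sum is an elementary
symmetric function of the modified weights, so everything reduces to the sums
`∑ c, w c * e_m(before c) * e_l(after c)`.

With `E(s) = ∏ i, (1 + w i * s)`, the generating function of these sums telescopes:
`(q - 1) * (s - t) * ∑ c, w c * E_before(s) * E_after(t) = E(q * s) * E(t) - E(s) * E(q * t)`.
Comparing coefficients gives a recursion whose solution is a sum of the terms
`(q ^ k - q ^ (n - k)) * e_k * e_{n - k}`, and the terms exchanged by `k ↦ n - k` cancel. The sums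
with `m = 0` also drive the induction on the size of a complete graph.
-/

open Finset Polynomial

theorem sum_Icc_max_eq_of_alternating {M : Type*} [AddCommMonoid M] (f : ℕ → ℕ → M)
    (hself : ∀ i, f i i = 0) (hswap : ∀ i j, f i j + f j i = 0) (m l : ℕ) :
    ∑ k ∈ Icc (max (m + 1) (l + 1)) (m + 1 + l), f k (m + 1 + l - k) =
      ∑ k ∈ Icc (m + 1) (m + 1 + l), f k (m + 1 + l - k) := by
  have hsub : Icc (max (m + 1) (l + 1)) (m + 1 + l) ⊆ Icc (m + 1) (m + 1 + l) :=
    Icc_subset_Icc_left (le_max_left _ _)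
  suffices h : ∑ k ∈ Icc (m + 1) (m + 1 + l) \ Icc (max (m + 1) (l + 1)) (m + 1 + l),
      f k (m + 1 + l - k) = 0 by
    rw [← sum_sdiff hsub, h, zero_add]
  refine sum_involution (fun k _ => m + 1 + l - k) (fun k hk => ?_) (fun k _ hne heq => ?_)
    (fun k hk => ?_) (fun k hk => ?_)
  · simp only [mem_sdiff, mem_Icc] at hk
    rw [Nat.sub_sub_self hk.1.2, hswap]
  · rw [heq, hself] at hne
    exact hne rfl
  all_goals
    simp only [mem_sdiff, mem_Icc] at hk ⊢
    omega

section OrderedProducts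

variable {ι B : Type*} [Fintype ι] [LinearOrder ι]

theorem prod_lt_mul_prod_gt [CommMonoid B] (f : ι → B) (c : ι) (hc : f c = 1) :
    (∏ i with i < c, f i) * ∏ i with c < i, f i = ∏ i, f i := by
  rw [prod_filter, prod_filter, ← prod_mul_distrib]
  refine prod_congr rfl fun i _ => ?_
  rcases lt_trichotomy i c with h | rfl | h
  · simp [h, h.not_gt]
  · simp [hc]
  · simp [h, h.not_gt]

theorem prod_sub_prod_ordered [CommRing B] (f g : ι → B) :
    ∏ i, f i - ∏ i, g i =
      ∑ c, (f c - g c) * ((∏ i with i < c, f i) * ∏ i with c < i, g i) := by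
  have h := prod_add_ordered univ g fun i => f i - g i
  simp only [add_sub_cancel, mul_assoc] at h
  rw [h, add_sub_cancel_left]

end OrderedProducts

section EdgeWeight

variable {ι A B : Type*} [LinearOrder ι] [CommRing A] [CommRing B]

/-- The factor that an edge contributes to the weight of a colouring, where `x` is the colour of
its smaller and `y` the colour of its larger endpoint. The value `0` for `x = y` removes the
improper colourings from sums over all colourings. -/
def edgeWeight (q : A) (x y : ι) : A :=
  if x < y then q else if x = y then 0 else 1

theorem map_edgeWeight (f : A →+* B) (q : A) (x y : ι) :
    f (edgeWeight q x y) = edgeWeight (f q) x y := by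
  simp only [edgeWeight, apply_ite f, map_zero, map_one]

theorem edgeWeight_of_lt (q : A) {x y : ι} (h : x < y) : edgeWeight q x y = q :=
  if_pos h

theorem edgeWeight_self (q : A) (x : ι) : edgeWeight q x x = 0 := by
  simp [edgeWeight]

theorem edgeWeight_of_gt (q : A) {x y : ι} (h : y < x) : edgeWeight q x y = 1 := by
  simp [edgeWeight, h.not_gt, h.ne']

theorem edgeWeight_of_ne (q : A) {x y : ι} (h : x ≠ y) :
    edgeWeight q x y = if x < y then q else 1 := by
  simp [edgeWeight, h]

variable [Fintype ι]

-- The telescoping replaces the factors `(1 + w c * s) * (1 + q * w c * t)` by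
-- `(1 + q * w c * s) * (1 + w c * t)` one at a time; the two differ by `(q - 1) * (s - t) * w c`.
theorem sub_one_mul_sum_prod_edgeWeight (q s t : A) (w : ι → A) :
    (q - 1) * (s - t) * ∑ c, w c * ((∏ i, (1 + edgeWeight q i c * w i * s)) *
        ∏ i, (1 + edgeWeight q c i * w i * t)) =
      (∏ i, (1 + q * w i * s)) * ∏ i, (1 + w i * t) -
        (∏ i, (1 + w i * s)) * ∏ i, (1 + q * w i * t) := by
  simp only [← prod_mul_distrib]
  rw [prod_sub_prod_ordered, mul_sum]
  refine sum_congr rfl fun c _ => ?_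
  rw [← prod_lt_mul_prod_gt _ c (by simp [edgeWeight_self])]
  have hlt : ∏ i with i < c, (1 + edgeWeight q i c * w i * s) * (1 + edgeWeight q c i * w i * t) =
      ∏ i with i < c, (1 + q * w i * s) * (1 + w i * t) :=
    prod_congr rfl fun i hi => by
      have h := (mem_filter.1 hi).2
      rw [edgeWeight_of_lt q h, edgeWeight_of_gt q h, one_mul]
  have hgt : ∏ i with c < i, (1 + edgeWeight q i c * w i * s) * (1 + edgeWeight q c i * w i * t) =
      ∏ i with c < i, (1 + w i * s) * (1 + q * w i * t) :=
    prod_congr rfl fun i hi => by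
      have h := (mem_filter.1 hi).2
      rw [edgeWeight_of_lt q h, edgeWeight_of_gt q h, one_mul]
  rw [hlt, hgt]
  ring

end EdgeWeight

section ElementarySymmetric

variable {ι A B : Type*} [Fintype ι] [CommRing A] [CommRing B]

/-- The generating polynomial `∑ k, e_k(w) X ^ k` of the elementary symmetric functions of the
family `w`. -/
noncomputable def esymmGen (w : ι → A) : A[X] :=
  ∏ i, (1 + C (w i) * X)

theorem map_esymmGen (f : A →+* B) (w : ι → A) :
    (esymmGen w).map f = esymmGen fun i => f (w i) := by
  simp [esymmGen, Polynomial.map_prod]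

theorem coeff_esymmGen (w : ι → A) (k : ℕ) :
    (esymmGen w).coeff k = (univ.val.map w).esymm k := by
  have hprod (s : Finset ι) : ∏ i ∈ s, (C (w i) * X) = C (∏ i ∈ s, w i) * X ^ #s := by
    rw [prod_mul_distrib, prod_const, map_prod]
  simp only [esymmGen, prod_one_add, hprod, finsetSum_coeff, coeff_C_mul_X_pow,
    esymm_map_val, powersetCard_eq_filter, sum_filter, eq_comm (a := k)]

theorem coeff_zero_esymmGen (w : ι → A) : (esymmGen w).coeff 0 = 1 := by
  simp [esymmGen, coeff_zero_prod]

theorem coeff_esymmGen_const_mul (q : A) (w : ι → A) (k : ℕ) :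
    (esymmGen fun i => q * w i).coeff k = q ^ k * (esymmGen w).coeff k := by
  rw [coeff_esymmGen, coeff_esymmGen, ← smul_eq_mul (q ^ k), Multiset.pow_smul_esymm,
    Multiset.map_map]
  rfl

end ElementarySymmetric

section GluedSum

variable {ι A B : Type*} [Fintype ι] [LinearOrder ι] [CommRing A] [CommRing B]

/-- The generating polynomial of the elementary symmetric functions of the weights `w i`, each
multiplied by the factor of an edge from a smaller vertex coloured `i` to a larger one coloured
`c`. -/
noncomputable def esymmGenBefore (q : A) (w : ι → A) (c : ι) : A[X] :=
  esymmGen fun i => edgeWeight q i c * w i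

/-- The generating polynomial of the elementary symmetric functions of the weights `w i`, each
multiplied by the factor of an edge from a smaller vertex coloured `c` to a larger one coloured
`i`. -/
noncomputable def esymmGenAfter (q : A) (w : ι → A) (c : ι) : A[X] :=
  esymmGen fun i => edgeWeight q c i * w i

/-- The sum over the colour `c` of the glued vertex of the contributions of two cliques with `m`
vertices before and `l` vertices after it, up to `q`-factorials. -/
noncomputable def gluedSum (q : A) (w : ι → A) (m l : ℕ) : A :=
  ∑ c, w c * ((esymmGenBefore q w c).coeff m * (esymmGenAfter q w c).coeff l)

theorem map_gluedSum (f : A →+* B) (q : A) (w : ι → A) (m l : ℕ) :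
    f (gluedSum q w m l) = gluedSum (f q) (fun i => f (w i)) m l := by
  simp only [gluedSum, esymmGenBefore, esymmGenAfter, map_sum, map_mul, ← coeff_map, map_esymmGen,
    map_edgeWeight]

/-- The generating polynomial of `gluedSum q w m l`, in which the inner variable marks `m` and the
outer variable marks `l`. -/
noncomputable def gluedGen (q : A) (w : ι → A) : A[X][X] :=
  ∑ c, C (C (w c)) * (C (esymmGenBefore q w c) * (esymmGenAfter q w c).map C)

theorem coeff_coeff_gluedGen (q : A) (w : ι → A) (m l : ℕ) :
    ((gluedGen q w).coeff l).coeff m = gluedSum q w m l := by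
  simp only [gluedGen, gluedSum, finsetSum_coeff, coeff_C_mul, coeff_map, coeff_mul_C]

theorem sub_one_mul_gluedGen (q : A) (w : ι → A) :
    C (C (q - 1)) * ((C X - X) * gluedGen q w) =
      C (esymmGen fun i => q * w i) * (esymmGen w).map C -
        C (esymmGen w) * (esymmGen fun i => q * w i).map C := by
  have h := sub_one_mul_sum_prod_edgeWeight (C (C q)) (C X) X fun i => C (C (w i))
  simpa [gluedGen, esymmGenBefore, esymmGenAfter, esymmGen, map_prod, Polynomial.map_prod,
    ← map_edgeWeight, mul_assoc] using h

theorem coeff_coeff_sub_one_mul_gluedGen (q : A) (w : ι → A) (m l : ℕ) :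
    (q - 1) * (((C X - X) * gluedGen q w).coeff l).coeff m =
      (q ^ m - q ^ l) * ((esymmGen w).coeff m * (esymmGen w).coeff l) := by
  have h := congrArg (fun p => (p.coeff l).coeff m) (sub_one_mul_gluedGen q w)
  simp only [coeff_C_mul, coeff_sub, coeff_map, coeff_mul_C, coeff_esymmGen_const_mul] at h
  linear_combination h

theorem sub_one_mul_gluedSum_zero_right (q : A) (w : ι → A) (m : ℕ) :
    (q - 1) * gluedSum q w m 0 =
      (q ^ (m + 1) - q ^ 0) * ((esymmGen w).coeff (m + 1) * (esymmGen w).coeff 0) := by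
  rw [← coeff_coeff_sub_one_mul_gluedGen, ← coeff_coeff_gluedGen]
  simp [mul_coeff_zero]

theorem sub_one_mul_gluedSum_succ_right (q : A) (w : ι → A) (m l : ℕ) :
    (q - 1) * gluedSum q w m (l + 1) =
      (q ^ (m + 1) - q ^ (l + 1)) * ((esymmGen w).coeff (m + 1) * (esymmGen w).coeff (l + 1)) +
        (q - 1) * gluedSum q w (m + 1) l := by
  rw [← coeff_coeff_sub_one_mul_gluedGen, ← coeff_coeff_gluedGen, ← coeff_coeff_gluedGen, ← mul_add]
  simp [sub_mul, coeff_X_mul]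

theorem sub_one_mul_gluedSum (q : A) (w : ι → A) (m l : ℕ) :
    (q - 1) * gluedSum q w m l = ∑ k ∈ Icc (m + 1) (m + 1 + l),
      (q ^ k - q ^ (m + 1 + l - k)) *
        ((esymmGen w).coeff k * (esymmGen w).coeff (m + 1 + l - k)) := by
  induction l generalizing m with
  | zero => simp [sub_one_mul_gluedSum_zero_right]
  | succ l ih =>
    have hn : m + 1 + 1 + l = m + 1 + (l + 1) := by omega
    rw [sub_one_mul_gluedSum_succ_right, ih, hn, Icc_add_one_left_eq_Ioc,
      ← add_sum_Ioc_eq_sum_Icc (a := m + 1) (by omega), Nat.add_sub_cancel_left]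

theorem sub_one_mul_geom_sum_shift (q : A) {n k : ℕ} (hk : k ≤ n) (hn : n ≤ 2 * k) :
    (q - 1) * (q ^ (n - k) * ∑ j ∈ range (2 * k - n), q ^ j) = q ^ k - q ^ (n - k) := by
  rw [mul_left_comm, mul_geom_sum, mul_sub, mul_one, ← pow_add]
  congr 2
  omega

theorem gluedSum_eq_of_isLeftRegular {q : A} (hq : IsLeftRegular (q - 1)) (w : ι → A) (m l : ℕ) :
    gluedSum q w m l = ∑ k ∈ Icc (max (m + 1) (l + 1)) (m + 1 + l),
      q ^ (m + 1 + l - k) * (∑ j ∈ range (2 * k - (m + 1 + l)), q ^ j) *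
        ((esymmGen w).coeff k * (esymmGen w).coeff (m + 1 + l - k)) := by
  refine hq ?_
  beta_reduce
  rw [sub_one_mul_gluedSum, mul_sum, ← sum_Icc_max_eq_of_alternating
    (fun i j => (q ^ i - q ^ j) * ((esymmGen w).coeff i * (esymmGen w).coeff j))
    (fun i => by ring) (fun i j => by ring)]
  refine sum_congr rfl fun k hk => ?_
  rw [mem_Icc] at hk
  rw [← mul_assoc (q - 1), sub_one_mul_geom_sum_shift q hk.2 (by omega)]

-- Both sides commute with specialization of `q`, so `q` may be taken to be an indeterminate.
theorem gluedSum_eq (q : A) (w : ι → A) (m l : ℕ) :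
    gluedSum q w m l = ∑ k ∈ Icc (max (m + 1) (l + 1)) (m + 1 + l),
      q ^ (m + 1 + l - k) * (∑ j ∈ range (2 * k - (m + 1 + l)), q ^ j) *
        ((esymmGen w).coeff k * (esymmGen w).coeff (m + 1 + l - k)) := by
  have hX : IsLeftRegular (X - 1 : A[X]) := (monic_X_sub_C 1).isRegular.left
  have h := congrArg (evalRingHom q) (gluedSum_eq_of_isLeftRegular hX (fun i => C (w i)) m l)
  simpa only [map_gluedSum, map_sum, map_mul, map_pow, ← coeff_map, map_esymmGen,
    coe_evalRingHom, eval_X, eval_C] using h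

theorem gluedSum_zero_left (q : A) (w : ι → A) (l : ℕ) :
    gluedSum q w 0 l = (∑ j ∈ range (l + 1), q ^ j) * (esymmGen w).coeff (l + 1) := by
  have hlen : 2 * (l + 1) - (l + 1) = l + 1 := by omega
  simp [gluedSum_eq, add_comm 1 l, coeff_zero_esymmGen, hlen]

end GluedSum

section QIntegers

variable {A : Type*} [CommRing A]

theorem aeval_qint (q : A) (m : ℕ) : aeval q (qint m) = ∑ i ∈ range m, q ^ i := by
  simp [qint]

theorem aeval_qfact_succ (q : A) (m : ℕ) :
    aeval q (qfact (m + 1)) = (∑ i ∈ range (m + 1), q ^ i) * aeval q (qfact m) := by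
  rw [qfact, map_mul, aeval_qint]

theorem aeval_apply_X (f : ℤ[X] →+* A) (p : ℤ[X]) : aeval (f X) p = f p := by
  have h : (aeval (f X) : ℤ[X] →ₐ[ℤ] A).toRingHom = f :=
    ringHom_ext' (RingHom.ext_int _ _) (aeval_X _)
  exact RingHom.congr_fun h p

end QIntegers

section WeightedColourings

variable {ι A : Type*} [LinearOrder ι] [CommRing A]

theorem prod_edgeWeight_eq_zero {n : ℕ} (G : SimpleGraph (Fin n)) [DecidableRel G.Adj] (q : A)
    {κ : Fin n → ι} {i j : Fin n} (hadj : G.Adj i j) (hκ : κ i = κ j) :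
    (∏ i, ∏ j, if i < j ∧ G.Adj i j then edgeWeight q (κ i) (κ j) else 1) = 0 := by
  wlog hlt : i < j generalizing i j
  · exact this hadj.symm hκ.symm (lt_of_le_of_ne (not_lt.1 hlt) hadj.ne')
  refine prod_eq_zero (mem_univ i) (prod_eq_zero (mem_univ j) ?_)
  rw [if_pos ⟨hlt, hadj⟩, hκ, edgeWeight_self]

theorem prod_edgeWeight_eq_pow_ascNum {n N : ℕ} (G : SimpleGraph (Fin n)) [DecidableRel G.Adj]
    (q : A) {κ : Fin n → Fin N} (hκ : ∀ i j, G.Adj i j → κ i ≠ κ j) :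
    (∏ i, ∏ j, if i < j ∧ G.Adj i j then edgeWeight q (κ i) (κ j) else 1) = q ^ ascNum G κ := by
  rw [ascNum, Nat.card_eq_fintype_card, Fintype.card_subtype, ← prod_const, prod_filter,
    Fintype.prod_prod_type]
  refine prod_congr rfl fun i _ => prod_congr rfl fun j _ => ?_
  by_cases hij : i < j ∧ G.Adj i j
  · simp [hij, edgeWeight_of_ne q (hκ i j hij.2)]
  · rw [if_neg hij, if_neg fun h => hij ⟨h.1, h.2.1⟩]

variable [Fintype ι]

open Classical in
/-- The chromatic quasisymmetric function of `G` with colours in `ι`, evaluated at `x_i = w i` and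
at an arbitrary parameter `q`. It is written as a sum over all colourings, the improper ones having
weight `0`. -/
noncomputable def weightedCqf {n : ℕ} (G : SimpleGraph (Fin n)) (q : A) (w : ι → A) : A :=
  ∑ κ : Fin n → ι,
    (∏ i, ∏ j, if i < j ∧ G.Adj i j then edgeWeight q (κ i) (κ j) else 1) * ∏ i, w (κ i)

theorem cqf_eq_weightedCqf {n : ℕ} (G : SimpleGraph (Fin n)) (N : ℕ) :
    cqf G N = weightedCqf G (MvPolynomial.C X) MvPolynomial.X := by
  classical
  rw [cqf, weightedCqf, finsum_eq_sum_of_fintype]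
  refine sum_congr rfl fun κ _ => ?_
  rw [finsum_eq_if]
  split_ifs with hκ
  · rw [prod_edgeWeight_eq_pow_ascNum G _ hκ, map_pow]
  · push Not at hκ
    obtain ⟨i, j, hadj, hij⟩ := hκ
    rw [prod_edgeWeight_eq_zero G _ hadj hij, zero_mul]

theorem weightedCqf_top (m : ℕ) (q : A) (w : ι → A) :
    weightedCqf (⊤ : SimpleGraph (Fin m)) q w = ∑ κ : Fin m → ι,
      (∏ i, ∏ j, if i < j then edgeWeight q (κ i) (κ j) else 1) * ∏ i, w (κ i) := by
  simp only [weightedCqf, SimpleGraph.top_adj, and_iff_left_of_imp ne_of_lt]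

theorem weightedCqf_top_succ (m : ℕ) (q : A) (w : ι → A) :
    weightedCqf (⊤ : SimpleGraph (Fin (m + 1))) q w =
      ∑ c, w c * weightedCqf (⊤ : SimpleGraph (Fin m)) q (fun i => edgeWeight q c i * w i) := by
  simp only [weightedCqf_top, mul_sum]
  rw [← Fintype.sum_prod_type', ← (Fin.consEquiv fun _ : Fin (m + 1) => ι).sum_comp]
  refine sum_congr rfl fun κ _ => ?_
  simp only [Fin.consEquiv, Equiv.coe_fn_mk, Fin.prod_univ_succ, not_lt_zero, ↓reduceIte,
    Fin.cons_succ, one_mul, Fin.succ_pos, Fin.cons_zero, Fin.succ_lt_succ_iff, prod_mul_distrib]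
  ring

theorem weightedCqf_top_eq (m : ℕ) (q : A) (w : ι → A) :
    weightedCqf (⊤ : SimpleGraph (Fin m)) q w = aeval q (qfact m) * (esymmGen w).coeff m := by
  induction m generalizing w with
  | zero => simp [weightedCqf_top, coeff_zero_esymmGen, qfact]
  | succ m ih =>
    have hglued : gluedSum q w 0 m = ∑ c, w c * (esymmGenAfter q w c).coeff m := by
      simp [gluedSum, esymmGenBefore, coeff_zero_esymmGen]
    rw [weightedCqf_top_succ, aeval_qfact_succ, mul_right_comm, ← gluedSum_zero_left, hglued,
      sum_mul]
    refine sum_congr rfl fun c _ => ?_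
    rw [ih, esymmGenAfter]
    ring

end WeightedColourings

theorem KChain2_lt_and_adj_iff (m l : ℕ) (i j : Fin (m + 1 + (l + 1) - 1)) :
    (i < j ∧ (KChain2 (m + 1) (l + 1)).Adj i j) ↔
      (i : ℕ) < j ∧ ((j : ℕ) < m + 1 ∨ m ≤ (i : ℕ)) := by
  rw [KChain2, SimpleGraph.fromRel_adj, Fin.lt_def, Ne, Fin.ext_iff]
  omega

theorem sum_eq_sum_append_snoc {ι M : Type*} [Fintype ι] [AddCommMonoid M] {m l : ℕ}
    (F : (Fin (m + 1 + l) → ι) → M) :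
    ∑ κ, F κ = ∑ c, ∑ u : Fin m → ι, ∑ v : Fin l → ι,
      F (Fin.append (Fin.snoc u c : Fin (m + 1) → ι) v) := by
  rw [← (Fin.appendEquiv (m + 1) l).sum_comp, Fintype.sum_prod_type,
    ← (Fin.snocEquiv fun _ : Fin (m + 1) => ι).sum_comp, Fintype.sum_prod_type]
  rfl

theorem prod_append_snoc {ι M : Type*} [CommMonoid M] {m l : ℕ} (f : ι → M) (u : Fin m → ι) (c : ι)
    (v : Fin l → ι) :
    ∏ i, f (Fin.append (Fin.snoc u c : Fin (m + 1) → ι) v i) =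
      (∏ i, f (u i)) * f c * ∏ j, f (v j) := by
  simp [Fin.prod_univ_add, Fin.prod_univ_castSucc]

theorem prod_pairs_append_snoc {ι M : Type*} [CommMonoid M] {m l : ℕ} (f : ι → ι → M)
    (u : Fin m → ι) (c : ι) (v : Fin l → ι) {κ : Fin (m + 1 + l) → ι}
    (hκ : κ = Fin.append (Fin.snoc u c : Fin (m + 1) → ι) v) :
    (∏ i : Fin (m + 1 + l), ∏ j : Fin (m + 1 + l),
        if (i : ℕ) < j ∧ ((j : ℕ) < m + 1 ∨ m ≤ (i : ℕ)) then f (κ i) (κ j) else 1) =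
      ((∏ i, ∏ j, if i < j then f (u i) (u j) else 1) * ∏ i, f (u i) c) *
        ((∏ j, f c (v j)) * ∏ i, ∏ j, if i < j then f (v i) (v j) else 1) := by
  subst hκ
  have hleft (i j : Fin m) : (i : ℕ) < j ∧ ((j : ℕ) < m + 1 ∨ m ≤ (i : ℕ)) ↔ i < j := by omega
  have hright (i j : Fin l) : m + 1 + (i : ℕ) < m + 1 + j ∧
      (m + 1 + (j : ℕ) < m + 1 ∨ m ≤ m + 1 + (i : ℕ)) ↔ i < j := by omega
  simp (disch := omega) only [Fin.prod_univ_add, Fin.prod_univ_castSucc, Fin.append_left,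
    Fin.append_right, Fin.snoc_castSucc, Fin.snoc_last, Fin.val_castAdd, Fin.val_natAdd,
    Fin.val_castSucc, Fin.val_last, hleft, hright, if_pos, if_neg, prod_mul_distrib,
    prod_const_one, mul_one, one_mul]

section Gluing

variable {ι A : Type*} [Fintype ι] [LinearOrder ι] [CommRing A]

theorem weightedCqf_KChain2 (m l : ℕ) (q : A) (w : ι → A) :
    weightedCqf (KChain2 (m + 1) (l + 1)) q w =
      ∑ c, w c * (weightedCqf (⊤ : SimpleGraph (Fin m)) q (fun i => edgeWeight q i c * w i) *
        weightedCqf (⊤ : SimpleGraph (Fin l)) q (fun i => edgeWeight q c i * w i)) := by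
  simp only [weightedCqf_top]
  simp only [weightedCqf, KChain2_lt_and_adj_iff]
  refine (sum_eq_sum_append_snoc (m := m) (l := l) _).trans ?_
  refine sum_congr rfl fun c _ => ?_
  rw [sum_mul_sum, mul_sum]
  refine sum_congr rfl fun u _ => ?_
  rw [mul_sum]
  refine sum_congr rfl fun v _ => ?_
  refine (congrArg₂ _ (prod_pairs_append_snoc _ u c v rfl) (prod_append_snoc w u c v)).trans ?_
  simp only [prod_mul_distrib]
  ring

theorem weightedCqf_KChain2_eq_gluedSum (m l : ℕ) (q : A) (w : ι → A) :
    weightedCqf (KChain2 (m + 1) (l + 1)) q w =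
      aeval q (qfact m * qfact l) * gluedSum q w m l := by
  rw [weightedCqf_KChain2, gluedSum, mul_sum, map_mul]
  refine sum_congr rfl fun c _ => ?_
  rw [weightedCqf_top_eq, weightedCqf_top_eq, esymmGenBefore, esymmGenAfter]
  ring

theorem cqf_KChain2_general (a b : ℕ) (ha : 1 ≤ a) (hb : 1 ≤ b) (q : A) (w : ι → A) :
    weightedCqf (KChain2 a b) q w =
      aeval q (qfact (a - 1) * qfact (b - 1)) *
        ∑ k ∈ Icc (max a b) (a + b - 1),
          aeval q (X ^ (a + b - 1 - k) * qint (2 * k - (a + b - 1))) *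
            ((univ.val.map w).esymm k * (univ.val.map w).esymm (a + b - 1 - k)) := by
  obtain ⟨m, rfl⟩ := Nat.exists_eq_add_of_le' ha
  obtain ⟨l, rfl⟩ := Nat.exists_eq_add_of_le' hb
  rw [weightedCqf_KChain2_eq_gluedSum, gluedSum_eq]
  simp only [coeff_esymmGen, map_mul, map_pow, aeval_X, aeval_qint, Nat.add_sub_cancel, ← add_assoc]

end Gluing

/-- for `a, b ≥ 2` and `n = a + b - 1`,
`X_{K_{ab}}(x;q) = [a-1]_q! [b-1]_q! Σ_{k = max(a,b)}^{n} q^{n-k} [2k-n]_q e_{(k,n-k)}`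
(in every number `N` of variables). -/
theorem cqf_KChain2 (a b : ℕ) (ha : 2 ≤ a) (hb : 2 ≤ b) (N : ℕ) :
    cqf (KChain2 a b) N =
      MvPolynomial.C (qfact (a - 1) * qfact (b - 1)) *
        ∑ k ∈ Finset.Icc (max a b) (a + b - 1),
          MvPolynomial.C (Polynomial.X ^ (a + b - 1 - k) * qint (2 * k - (a + b - 1))) *
            (MvPolynomial.esymm (Fin N) (Polynomial ℤ) k *
              MvPolynomial.esymm (Fin N) (Polynomial ℤ) (a + b - 1 - k)) := by
  simp only [cqf_eq_weightedCqf, cqf_KChain2_general a b (by omega) (by omega),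
    aeval_apply_X, MvPolynomial.esymm_eq_multiset_esymm]
end
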